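/- Fix positive reals α, h̄, c̄, ρ̄_s, s, e, m, n, T = tanθ, and assume K = 0; set a := s·ρ̄_s/(e·h̄). Then for every real η, the characteristic polynomial of the matrix A(0,η) equals X·(X² + (a + α η² h̄)·X + α η² a h̄·(1 − m c̄/ρ̄_s)); consequently the eigenvalues of A(0,η) are 0 and λ±(η) = (−(a + α h̄ η²) ± √((a − α h̄ η²)² + 4 α η² a m h̄ c̄/ρ̄_s)) / 2. -/

import Mathlib

/-!
For `ξ = 0` the symbol is a real matrix, since the slope terms carry the factor `iξ`. Erosion and
deposition only move sediment between the water column and the bed, so the total sediment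
`h̄ c + ρ̄ₛ z` changes through creep alone: without creep, `(0, h̄, ρ̄ₛ)` is a left null vector of
the symbol. The determinant therefore vanishes, and the trace and the sum of the principal
`2 × 2` minors give the remaining quadratic factor, whose discriminant is the radicand in `λ±`.
-/

/-- The Fourier symbol `A(ξ,η) = A₀ + iξ·A₁ − (ξ²+η²)·A₂` of the linearized
landscape evolution system about the constant state `(h̄, c̄, 0)`, with
`a = s·ρ̄ₛ/(e·h̄)` and slope parameter `T = tan θ`. -/
noncomputable def landA (α hb cb ρs s e m n T K : ℝ) (ξ η : ℝ) :
    Matrix (Fin 3) (Fin 3) ℂ :=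
  ((!![0, 0, 0;
       (s * ρs / (e * hb)) * m * cb / hb, -(s * ρs / (e * hb)), 0;
       -((s * ρs / (e * hb)) * m * cb / ρs), (s * ρs / (e * hb)) * hb / ρs, 0] :
      Matrix (Fin 3) (Fin 3) ℝ).map Complex.ofReal)
  + (Complex.I * (ξ : ℂ)) •
    ((!![-T, 0, 0;
         -(α * (s * ρs / (e * hb)) * n * cb / T), -T,
           -(α * (s * ρs / (e * hb)) * n * cb / T);
         α * (s * ρs / (e * hb)) * n * hb * cb / (ρs * T), 0,
           α * (s * ρs / (e * hb)) * n * hb * cb / (ρs * T)] :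
        Matrix (Fin 3) (Fin 3) ℝ).map Complex.ofReal)
  - (((ξ ^ 2 + η ^ 2 : ℝ) : ℂ)) •
    ((!![α * hb, 0, α * hb; 0, 0, 0; 0, 0, K] :
        Matrix (Fin 3) (Fin 3) ℝ).map Complex.ofReal)

/-- Spectral stability: every eigenvalue (root of the characteristic
polynomial) has strictly negative real part. -/
def SpectrallyStable (A : Matrix (Fin 3) (Fin 3) ℂ) : Prop :=
  ∀ z : ℂ, A.charpoly.IsRoot z → z.re < 0

open Polynomial

/-- The two nonzero eigenvalues `λ±(η)` of `A(0,η)` when `K = 0`. -/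
noncomputable def lamP (α hb cb ρs a m : ℝ) (η : ℝ) : ℝ :=
  (-(a + α * hb * η ^ 2) +
      Real.sqrt ((a - α * hb * η ^ 2) ^ 2 + 4 * α * η ^ 2 * a * m * hb * cb / ρs)) / 2

noncomputable def lamM (α hb cb ρs a m : ℝ) (η : ℝ) : ℝ :=
  (-(a + α * hb * η ^ 2) -
      Real.sqrt ((a - α * hb * η ^ 2) ^ 2 + 4 * α * η ^ 2 * a * m * hb * cb / ρs)) / 2

theorem charpoly_fin_three {R : Type*} [CommRing R] (A : Matrix (Fin 3) (Fin 3) R) :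
    A.charpoly = X ^ 3 - C A.trace * X ^ 2 + C A.adjugate.trace * X - C A.det := by
  rw [Matrix.charpoly, Matrix.det_fin_three, Matrix.det_fin_three, Matrix.adjugate_fin_three,
    Matrix.trace_fin_three, Matrix.trace_fin_three_of]
  simp only [Matrix.charmatrix_apply_eq, Matrix.charmatrix_apply_ne, ne_eq, Fin.reduceEq,
    not_false_eq_true, C_add, C_sub, C_mul]
  ring

theorem ofReal_quadratic_eq_zero_iff {a b c : ℝ} (ha : a ≠ 0) (hΔ : 0 ≤ discrim a b c) (z : ℂ) :
    (a : ℂ) * (z * z) + b * z + c = 0 ↔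
      z = ((-b + √(discrim a b c)) / (2 * a) : ℝ) ∨
        z = ((-b - √(discrim a b c)) / (2 * a) : ℝ) := by
  have hsqrt : discrim (a : ℂ) b c = (√(discrim a b c) : ℂ) * (√(discrim a b c) : ℂ) := by
    rw [← Complex.ofReal_mul, Real.mul_self_sqrt hΔ]
    simp [discrim]
  rw [quadratic_eq_zero_iff (Complex.ofReal_ne_zero.mpr ha) hsqrt]
  push_cast
  rfl

/-- The real matrix `A(0,η)`, with the sediment rate `a = s·ρ̄ₛ/(e·h̄)` as a free parameter.
Neither `n` nor `T` enters, since both occur only in the `ξ`-terms of the symbol. -/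
noncomputable def transverseSymbol (α hb cb ρs a m K η : ℝ) : Matrix (Fin 3) (Fin 3) ℝ :=
  !![-(α * hb * η ^ 2), 0, -(α * hb * η ^ 2);
     a * m * cb / hb, -a, 0;
     -(a * m * cb / ρs), a * hb / ρs, -(K * η ^ 2)]

section TransverseSymbol

variable {α hb cb ρs a m K η : ℝ}

theorem trace_transverseSymbol :
    (transverseSymbol α hb cb ρs a m K η).trace = -(a + α * hb * η ^ 2 + K * η ^ 2) := by
  rw [transverseSymbol, Matrix.trace_fin_three_of]
  ring

theorem trace_adjugate_transverseSymbol :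
    (transverseSymbol α hb cb ρs a m K η).adjugate.trace =
      α * η ^ 2 * a * hb * (1 - m * cb / ρs) + K * η ^ 2 * (a + α * hb * η ^ 2) := by
  rw [transverseSymbol, Matrix.adjugate_fin_three_of, Matrix.trace_fin_three_of]
  ring

theorem vecMul_transverseSymbol (hhb : hb ≠ 0) (hρs : ρs ≠ 0) :
    Matrix.vecMul ![0, hb, ρs] (transverseSymbol α hb cb ρs a m K η) =
      ![0, 0, -(ρs * K * η ^ 2)] := by
  ext j
  fin_cases j <;> simp [transverseSymbol, Matrix.vecMul, dotProduct, Fin.sum_univ_three] <;>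
    field_simp <;> ring

theorem det_transverseSymbol_no_creep (hhb : hb ≠ 0) (hρs : ρs ≠ 0) :
    (transverseSymbol α hb cb ρs a m 0 η).det = 0 := by
  refine Matrix.exists_vecMul_eq_zero_iff.mp ⟨![0, hb, ρs], fun h => hhb (congrFun h 1), ?_⟩
  simp [vecMul_transverseSymbol hhb hρs]

theorem charpoly_transverseSymbol_no_creep (hhb : hb ≠ 0) (hρs : ρs ≠ 0) :
    (transverseSymbol α hb cb ρs a m 0 η).charpoly =
      X * (X ^ 2 + C (a + α * η ^ 2 * hb) * X
        + C (α * η ^ 2 * a * hb * (1 - m * cb / ρs))) := by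
  rw [charpoly_fin_three, trace_transverseSymbol, trace_adjugate_transverseSymbol,
    det_transverseSymbol_no_creep hhb hρs]
  simp only [C_neg, C_add, C_mul, C_0, zero_mul]
  ring

theorem discrim_transverse :
    discrim 1 (a + α * η ^ 2 * hb) (α * η ^ 2 * a * hb * (1 - m * cb / ρs)) =
      (a - α * hb * η ^ 2) ^ 2 + 4 * α * η ^ 2 * a * m * hb * cb / ρs := by
  rw [discrim]
  ring

theorem transverse_quadratic_eq_zero_iff
    (hΔ : 0 ≤ (a - α * hb * η ^ 2) ^ 2 + 4 * α * η ^ 2 * a * m * hb * cb / ρs) (z : ℂ) :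
    z ^ 2 + ((a + α * η ^ 2 * hb : ℝ) : ℂ) * z
        + ((α * η ^ 2 * a * hb * (1 - m * cb / ρs) : ℝ) : ℂ) = 0 ↔
      z = (lamP α hb cb ρs a m η : ℂ) ∨ z = (lamM α hb cb ρs a m η : ℂ) := by
  rw [← discrim_transverse] at hΔ
  have hroots := ofReal_quadratic_eq_zero_iff one_ne_zero hΔ z
  rw [discrim_transverse] at hroots
  convert hroots using 2
  · simp only [Complex.ofReal_one, one_mul, sq]
  · rw [lamP, mul_one, mul_right_comm α]
  · rw [lamM, mul_one, mul_right_comm α]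

end TransverseSymbol

theorem landA_transverse_eq_map (α hb cb ρs s e m n T K η : ℝ) :
    landA α hb cb ρs s e m n T K 0 η =
      (transverseSymbol α hb cb ρs (s * ρs / (e * hb)) m K η).map Complex.ofRealHom := by
  ext i j
  fin_cases i <;> fin_cases j <;> simp [landA, transverseSymbol] <;> ring

theorem charpoly_landA_transverse_no_creep {hb ρs : ℝ} (hhb : hb ≠ 0) (hρs : ρs ≠ 0)
    (α cb s e m n T η : ℝ) :
    (landA α hb cb ρs s e m n T 0 0 η).charpoly =
      X * (X ^ 2 + C ((s * ρs / (e * hb) + α * η ^ 2 * hb : ℝ) : ℂ) * X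
        + C ((α * η ^ 2 * (s * ρs / (e * hb)) * hb * (1 - m * cb / ρs) : ℝ) : ℂ)) := by
  rw [landA_transverse_eq_map, Matrix.charpoly_map, charpoly_transverseSymbol_no_creep hhb hρs]
  simp only [Polynomial.map_mul, Polynomial.map_add, Polynomial.map_pow, map_X, map_C,
    Complex.ofRealHom_eq_coe]

theorem isRoot_charpoly_landA_transverse_no_creep_iff {α hb cb ρs s e m η : ℝ}
    (hhb : hb ≠ 0) (hρs : ρs ≠ 0)
    (hΔ : 0 ≤ (s * ρs / (e * hb) - α * hb * η ^ 2) ^ 2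
      + 4 * α * η ^ 2 * (s * ρs / (e * hb)) * m * hb * cb / ρs) (n T : ℝ) (z : ℂ) :
    (landA α hb cb ρs s e m n T 0 0 η).charpoly.IsRoot z ↔
      z = 0 ∨ z = (lamP α hb cb ρs (s * ρs / (e * hb)) m η : ℂ)
        ∨ z = (lamM α hb cb ρs (s * ρs / (e * hb)) m η : ℂ) := by
  rw [charpoly_landA_transverse_no_creep hhb hρs, root_mul, IsRoot.def, IsRoot.def,
    ← transverse_quadratic_eq_zero_iff hΔ]
  simp only [eval_add, eval_mul, eval_pow, eval_X, eval_C]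

theorem charpoly_transverse_no_creep_general (α hb cb ρs s e m n T η : ℝ)
    (hhb : hb ≠ 0) (hρs : ρs ≠ 0) (he : e ≠ 0) (hT : T ≠ 0)
    (hΔ : 0 ≤ (s * ρs / (e * hb) - α * hb * η ^ 2) ^ 2
      + 4 * α * η ^ 2 * (s * ρs / (e * hb)) * m * hb * cb / ρs) :
    (landA α hb cb ρs s e m n T 0 0 η).charpoly =
      X * (X ^ 2 + C ((s * ρs / (e * hb) + α * η ^ 2 * hb : ℝ) : ℂ) * X
        + C ((α * η ^ 2 * (s * ρs / (e * hb)) * hb * (1 - m * cb / ρs) : ℝ) : ℂ)) ∧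
    (landA α hb cb ρs s e m n T 0 0 η).charpoly.IsRoot 0 ∧
    (landA α hb cb ρs s e m n T 0 0 η).charpoly.IsRoot
      ((lamP α hb cb ρs (s * ρs / (e * hb)) m η : ℝ) : ℂ) ∧
    (landA α hb cb ρs s e m n T 0 0 η).charpoly.IsRoot
      ((lamM α hb cb ρs (s * ρs / (e * hb)) m η : ℝ) : ℂ) ∧
    ∀ z : ℂ, (landA α hb cb ρs s e m n T 0 0 η).charpoly.IsRoot z →
      z = 0 ∨ z = ((lamP α hb cb ρs (s * ρs / (e * hb)) m η : ℝ) : ℂ)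
        ∨ z = ((lamM α hb cb ρs (s * ρs / (e * hb)) m η : ℝ) : ℂ) := by
  have hroot := isRoot_charpoly_landA_transverse_no_creep_iff hhb hρs hΔ n T
  exact ⟨charpoly_landA_transverse_no_creep hhb hρs α cb s e m n T η,
    (hroot _).mpr (.inl rfl), (hroot _).mpr (.inr (.inl rfl)), (hroot _).mpr (.inr (.inr rfl)),
    fun z => (hroot z).mp⟩

/-- When `K = 0` and `ξ = 0`, the characteristic polynomial of `A(0,η)`
factorizes as `X·(X² + (a + αη²h̄)X + αη²ah̄(1 − mc̄/ρ̄ₛ))`, so the eigenvalues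
of `A(0,η)` are `0` and `λ±(η)`. -/
theorem charpoly_transverse_no_creep (α hb cb ρs s e m n T : ℝ)
    (hα : 0 < α) (hhb : 0 < hb) (hcb : 0 < cb) (hρs : 0 < ρs)
    (hs : 0 < s) (he : 0 < e) (hm : 0 < m) (hn : 0 < n) (hT : 0 < T) :
    ∀ η : ℝ,
      (landA α hb cb ρs s e m n T 0 0 η).charpoly =
        X * (X ^ 2 + C ((s * ρs / (e * hb) + α * η ^ 2 * hb : ℝ) : ℂ) * X
          + C ((α * η ^ 2 * (s * ρs / (e * hb)) * hb * (1 - m * cb / ρs) : ℝ) : ℂ)) ∧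
      (landA α hb cb ρs s e m n T 0 0 η).charpoly.IsRoot 0 ∧
      (landA α hb cb ρs s e m n T 0 0 η).charpoly.IsRoot
        ((lamP α hb cb ρs (s * ρs / (e * hb)) m η : ℝ) : ℂ) ∧
      (landA α hb cb ρs s e m n T 0 0 η).charpoly.IsRoot
        ((lamM α hb cb ρs (s * ρs / (e * hb)) m η : ℝ) : ℂ) ∧
      ∀ z : ℂ, (landA α hb cb ρs s e m n T 0 0 η).charpoly.IsRoot z →
        z = 0 ∨ z = ((lamP α hb cb ρs (s * ρs / (e * hb)) m η : ℝ) : ℂ)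
          ∨ z = ((lamM α hb cb ρs (s * ρs / (e * hb)) m η : ℝ) : ℂ) := by
  intro η
  exact charpoly_transverse_no_creep_general α hb cb ρs s e m n T η hhb.ne' hρs.ne' he.ne' hT.ne'
    (by positivity)
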